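/- Let x ≥ 2.355 be a real number. Then for every finite bipartite graph H with minimum degree at least 1, T̃_H(x,0) · T̃_H(0,x) ≥ 1. -/

import Mathlib

open scoped Classical

/-- The permutation Tutte polynomial of a bipartite graph `G` on finite vertex set `V`
with bipartition class `A` (the other class being `Aᶜ`). -/
noncomputable def permTutte {V : Type*} [Fintype V] [DecidableEq V]
    (G : SimpleGraph V) (A : Set V) (x y : ℝ) : ℝ :=
  ((Fintype.card V).factorial : ℝ)⁻¹ *
    ∑ π : V ≃ Fin (Fintype.card V),
      x ^ Nat.card {i : V // i ∈ A ∧ ∀ j, G.Adj i j → π j < π i} *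
      y ^ Nat.card {j : V // j ∉ A ∧ ∀ i, G.Adj j i → π i < π j}

/-- `G` is bipartite with parts `A` and `Aᶜ`. -/
def IsBipartition {V : Type*} (G : SimpleGraph V) (A : Set V) : Prop :=
  ∀ u v, G.Adj u v → (u ∈ A ↔ v ∉ A)


/-- numeric -/
theorem num_k (k : ℕ) (hk : 1 ≤ k) : (((k:ℝ)+1)/2)^2 ≤ (471/200:ℝ)^(k-1) := by
  induction k, hk using Nat.le_induction with
  | base => norm_num
  | succ k hk ih =>
    rcases Nat.exists_eq_add_of_le hk with ⟨m, rfl⟩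
    simp only [Nat.add_sub_cancel_left, Nat.add_sub_cancel] at ih ⊢
    rw [add_comm 1 m, pow_succ (471/200:ℝ) m]
    push_cast at ih ⊢
    have hm : (0:ℝ) ≤ m := by positivity
    nlinarith

noncomputable def e1 (k d : ℕ) : ℝ :=
  1/((k:ℝ)+1) + 271/200 * ((1-(7/8)^(k+1))/((k:ℝ)+1) + (7/8)^(k+1)/((k:ℝ)+d+1))
noncomputable def e2 (k d : ℕ) : ℝ :=
  ((471/200)^(k+1) - (7/8 + 471/200*(1/8))^(k+1))/(271/200*((k:ℝ)+1)) - (7/8)^(k+d+1)/((k:ℝ)+d+1)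

theorem num_main (k d : ℕ) (h : 1 ≤ k ∨ 2 ≤ d) : 1 ≤ e1 k d * e2 k d := by
  rcases Nat.eq_zero_or_pos k with rfl | hk
  · have hd : 2 ≤ d := by omega
    unfold e1 e2
    have hd' : (2:ℝ) ≤ d := by exact_mod_cast hd
    set v : ℝ := 1/((d:ℝ)+1) with hv
    have hv0 : 0 < v := by positivity
    have hv1 : v ≤ 1/3 := by
      rw [hv]; apply one_div_le_one_div_of_le <;> linarith
    have hs : (7/8:ℝ)^(0+d+1) ≤ (7/8)^3 := pow_le_pow_of_le_one (by norm_num) (by norm_num) (by omega)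
    have hs0 : (0:ℝ) < (7/8:ℝ)^(0+d+1) := by positivity
    have e : ∀ a : ℝ, a/(((0:ℕ):ℝ)+d+1) = a * v := by intro a; rw [hv]; push_cast; rw [zero_add]; ring
    rw [e, e]
    norm_num at hs ⊢
    norm_num at hs0
    have : (7/8:ℝ)^(d+1) * v ≤ 343/512 * v := by gcongr
    have h2 : (1 + 271/200 * (1/8 + 7/8*v)) * (7/8 - 343/512*v) ≤ (1 + 271/200 * (1/8 + 7/8*v)) * (7/8 - (7/8:ℝ)^(d+1)*v) := by
      apply mul_le_mul_of_nonneg_left <;> nlinarith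
    nlinarith
  · unfold e1 e2
    have hx := num_k k hk
    have hk' : (1:ℝ) ≤ k := by exact_mod_cast hk
    have hr : (7/8:ℝ)^(k+1) ≤ (7/8)^2 := pow_le_pow_of_le_one (by norm_num) (by norm_num) (by omega)
    have hr0 : (0:ℝ) < (7/8:ℝ)^(k+1) := by positivity
    have hr2 : (7/8:ℝ)^(k+d+1) ≤ (7/8)^(k+1) := pow_le_pow_of_le_one (by norm_num) (by norm_num) (by omega)
    set r : ℝ := (7/8:ℝ)^(k+1)
    set D : ℝ := (471/200)^(k+1) - (7/8 + 471/200*(1/8))^(k+1) with hD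
    have hDl : (471/200:ℝ)^(k-1) * ((471/200)^2 - (7/8 + 471/200*(1/8))^2) ≤ D := by
      have e1 : (471/200:ℝ)^(k+1) = (471/200:ℝ)^(k-1) * (471/200)^2 := by
        rw [← pow_add]; congr 1; omega
      have e2 : (7/8 + 471/200*(1/8):ℝ)^(k+1) = (7/8 + 471/200*(1/8):ℝ)^(k-1) * (7/8 + 471/200*(1/8))^2 := by
        rw [← pow_add]; congr 1; omega
      have : (7/8 + 471/200*(1/8):ℝ)^(k-1) ≤ (471/200:ℝ)^(k-1) := by
        apply pow_le_pow_left₀ <;> norm_num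
      rw [hD, e1, e2]
      nlinarith
    have hD1 : 4.178 * (((k:ℝ)+1)/2)^2 ≤ D := by
      norm_num at hDl ⊢
      nlinarith
    set u : ℝ := 1/((k:ℝ)+d+1) with hu
    set q : ℝ := 1/((k:ℝ)+1) with hq
    have hu0 : 0 < u := by positivity
    have hq0 : 0 < q := by positivity
    have hqk : q * ((k:ℝ)+1) = 1 := by rw [hq]; field_simp
    have huq : u ≤ q := by
      rw [hu, hq]; apply one_div_le_one_div_of_le; positivity
      have : (0:ℝ) ≤ d := by positivity
      linarith
    have h1 : (1 - r)/((k:ℝ)+1) = (1-r)*q := by rw [hq]; ring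
    have h2 : r/((k:ℝ)+d+1) = r*u := by rw [hu]; ring
    have h3 : D/(271/200*((k:ℝ)+1)) = 200/271*D*q := by rw [hq]; field_simp
    have h4 : (7/8:ℝ)^(k+d+1)/((k:ℝ)+d+1) = (7/8:ℝ)^(k+d+1)*u := by rw [hu]; ring
    rw [h1,h2,h3,h4]
    have h5 : (7/8:ℝ)^(k+d+1)*u ≤ r*u := by gcongr
    have hDq : 4.178/4 ≤ D * q^2 := by
      have : 4.178/4 = 4.178 * (((k:ℝ)+1)/2)^2 * q^2 := by
        have : (q * ((k:ℝ)+1))^2 = 1 := by rw [hqk]; norm_num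
        linear_combination (-4.178/4) * this
      rw [this]; gcongr
    have hD2 : 471/200 ≤ D := by nlinarith
    have h6 : (q + 271/200*((1-r)*q + r*u)) * (200/271*D*q - r*u) ≤ (q + 271/200*((1-r)*q + r*u)) * (200/271*D*q - (7/8:ℝ)^(k+d+1)*u) := by
      apply mul_le_mul_of_nonneg_left
      · linarith
      · have : 0 ≤ (1-r)*q := by apply mul_nonneg <;> linarith
        positivity
    refine le_trans ?_ h6
    have h7 : (q + 271/200*((1-r)*q + r*u)) * (200/271*D*q - r*u) =
      (471/200 - 271/200*r)*(200/271)*(D*q^2) + (r*u)*(D*q - (471/200 - 271/200*r)*q - 271/200*(r*u)) := by ring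
    rw [h7]
    have h8 : 0 ≤ (r*u)*(D*q - (471/200 - 271/200*r)*q - 271/200*(r*u)) := by
      apply mul_nonneg (by positivity)
      have : r*u ≤ r*q := by gcongr
      have : 471/200*q ≤ D*q := by gcongr
      nlinarith
    have h9 : 1 ≤ (471/200 - 271/200*r)*(200/271)*(D*q^2) := by
      have : (471/200 - 271/200*(7/8)^2)*(200/271)*(4.178/4) ≤ (471/200 - 271/200*r)*(200/271)*(D*q^2) := by
        gcongr
        linarith
      refine le_trans ?_ this
      norm_num
    linarith

theorem harris2 {V : Type*} [Fintype V] [DecidableEq V] {N : ℕ} (A : Set V)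
    (p : V → Fin N → ℝ) (hp : ∀ v u, 0 ≤ p v u) (hs : ∀ v, ∑ u, p v u = 1)
    (g h : (V → Fin N) → ℝ) (hg0 : ∀ f, 0 ≤ g f) (hh0 : ∀ f, 0 ≤ h f)
    (hg : ∀ f f', (∀ v ∈ A, f v ≤ f' v) → (∀ v, v ∉ A → f' v ≤ f v) → g f ≤ g f')
    (hh : ∀ f f', (∀ v ∈ A, f v ≤ f' v) → (∀ v, v ∉ A → f' v ≤ f v) → h f ≤ h f') :
    (∑ f, (∏ v, p v (f v)) * g f) * (∑ f, (∏ v, p v (f v)) * h f)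
      ≤ ∑ f : V → Fin N, (∏ v, p v (f v)) * (g f * h f) := by
  have hs1 : ∑ f : V → Fin N, (∏ v, p v (f v)) = 1 := by
    rw [← Fintype.prod_sum]
    simp [hs]
  let φ : (V → Fin N) → (V → Fin N) := fun f v => if v ∈ A then f v else Fin.rev (f v)
  have hφ : Function.Involutive φ := by
    intro f; funext v; simp only [φ]; split_ifs <;> simp
  let e : (V → Fin N) ≃ (V → Fin N) := hφ.toPerm
  have key := fkg (α := V → Fin N) (β := ℝ) (μ := fun f => ∏ v, p v (φ f v)) (f := fun f => g (φ f)) (g := fun f => h (φ f))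
    (fun f => Finset.prod_nonneg fun v _ => hp _ _) (fun f => hg0 _) (fun f => hh0 _)
    (by
      intro a b hab
      apply hg
      · intro v hv; simp only [φ, hv, if_true]; exact hab v
      · intro v hv; simp only [φ, hv, if_false]; exact Fin.rev_le_rev.2 (hab v))
    (by
      intro a b hab
      apply hh
      · intro v hv; simp only [φ, hv, if_true]; exact hab v
      · intro v hv; simp only [φ, hv, if_false]; exact Fin.rev_le_rev.2 (hab v))
    (by
      intro a b
      rw [← Finset.prod_mul_distrib, ← Finset.prod_mul_distrib]
      apply le_of_eq
      apply Finset.prod_congr rfl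
      intro v _
      simp only [φ, Pi.inf_apply, Pi.sup_apply]
      rcases le_total (a v) (b v) with h | h
      · rw [inf_eq_left.2 h, sup_eq_right.2 h]
      · rw [inf_eq_right.2 h, sup_eq_left.2 h, mul_comm])
  have r : ∀ q : (V → Fin N) → ℝ, ∑ f, q (φ f) = ∑ f, q f := fun q => e.sum_comp q
  rw [r (fun f => (∏ v, p v (f v)) * g f), r (fun f => (∏ v, p v (f v)) * h f),
    r (fun f => (∏ v, p v (f v))), r (fun f => (∏ v, p v (f v)) * (g f * h f)), hs1, one_mul] at key
  exact key

theorem harris {V : Type*} [Fintype V] [DecidableEq V] {N : ℕ} (A : Set V)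
    (p : V → Fin N → ℝ) (hp : ∀ v u, 0 ≤ p v u) (hs : ∀ v, ∑ u, p v u = 1)
    (g : V → (V → Fin N) → ℝ) (hg0 : ∀ i f, 0 ≤ g i f)
    (hg : ∀ i f f', (∀ v ∈ A, f v ≤ f' v) → (∀ v, v ∉ A → f' v ≤ f v) → g i f ≤ g i f')
    (I : Finset V) :
    ∏ i ∈ I, (∑ f, (∏ v, p v (f v)) * g i f)
      ≤ ∑ f : V → Fin N, (∏ v, p v (f v)) * ∏ i ∈ I, g i f := by
  induction I using Finset.induction_on with
  | empty =>
    simp only [Finset.prod_empty, mul_one]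
    rw [← Fintype.prod_sum]
    simp [hs]
  | insert a I ha ih =>
    simp only [Finset.prod_insert ha]
    refine le_trans (mul_le_mul_of_nonneg_left ih ?_) ?_
    · exact Finset.sum_nonneg fun f _ => mul_nonneg (Finset.prod_nonneg fun v _ => hp _ _) (hg0 _ _)
    · apply harris2 A p hp hs _ _ (hg0 a) (fun f => Finset.prod_nonneg fun i _ => hg0 _ _) (hg a)
      intro f f' h1 h2
      exact Finset.prod_le_prod (fun i _ => hg0 _ _) (fun i _ => hg i f f' h1 h2)

theorem expect {V : Type*} [Fintype V] [DecidableEq V] {N : ℕ}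
    (p : V → Fin N → ℝ) (hs : ∀ v, ∑ u, p v u = 1) (i : V) (T : Finset V) (hi : i ∉ T)
    (c : V → Fin N → Fin N → ℝ) :
    ∑ f : V → Fin N, (∏ v, p v (f v)) * ∏ v ∈ T, c v (f i) (f v)
     = ∑ t, p i t * ∏ v ∈ T, ∑ u, p v u * c v t u := by
  let q : Fin N → V → Fin N → ℝ := fun t v u =>
    if v = i then (if u = t then p i t else 0) else if v ∈ T then p v u * c v t u else p v u
  have h1 : ∀ f : V → Fin N, (∏ v, p v (f v)) * ∏ v ∈ T, c v (f i) (f v) = ∑ t, ∏ v, q t v (f v) := by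
    intro f
    rw [Finset.sum_eq_single (f i)]
    · have : ∏ v ∈ T, c v (f i) (f v) = ∏ v, if v ∈ T then c v (f i) (f v) else 1 := by
        simp
      rw [this, ← Finset.prod_mul_distrib]
      apply Finset.prod_congr rfl
      intro v _
      simp only [q]
      by_cases hv : v = i
      · subst hv; simp [hi]
      · simp only [hv, if_false]; split_ifs <;> simp
    · intro t _ ht
      apply Finset.prod_eq_zero (Finset.mem_univ i)
      simp [q, Ne.symm ht]
    · simp
  simp_rw [h1]
  rw [Finset.sum_comm]
  apply Finset.sum_congr rfl
  intro t _
  rw [← Fintype.prod_sum]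
  rw [← Finset.mul_prod_erase _ _ (Finset.mem_univ i)]
  congr 1
  · simp [q]
  · have hT : T ⊆ Finset.univ.erase i := by
      intro v hv; simp; rintro rfl; exact hi hv
    rw [← Finset.prod_subset hT]
    · apply Finset.prod_congr rfl
      intro v hv
      have : v ≠ i := by rintro rfl; exact hi hv
      simp [q, this, hv]
    · intro v hv hvT
      have : v ≠ i := by simpa using hv
      simp [q, this, hvT, hs]

noncomputable def wt {V β : Type*} [LinearOrder β] (G : SimpleGraph V) (A : Set V) (x : ℝ)
    (f : V → β) (v : V) : ℝ :=
  if ∀ j, G.Adj v j → f j < f v then (if v ∈ A then x else 0) else 1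

theorem wt_nonneg {V β : Type*} [LinearOrder β] (G : SimpleGraph V) (A : Set V) (x : ℝ) (hx : 1 ≤ x)
    (f : V → β) (v : V) : 0 ≤ wt G A x f v := by
  unfold wt; split_ifs <;> linarith

theorem wt_le {V β : Type*} [LinearOrder β] (G : SimpleGraph V) (A : Set V) (x : ℝ) (hx : 1 ≤ x)
    (f : V → β) (v : V) : wt G A x f v ≤ x := by
  unfold wt; split_ifs <;> linarith

theorem permTutte_eq {V : Type*} [Fintype V] [DecidableEq V]
    (G : SimpleGraph V) (A : Set V) (x : ℝ) :
    permTutte G A x 0 = ((Fintype.card V).factorial : ℝ)⁻¹ *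
      ∑ π : V ≃ Fin (Fintype.card V), ∏ v, wt G A x π v := by
  unfold permTutte
  congr 1
  apply Finset.sum_congr rfl
  intro π _
  have h : ∀ (P : V → Prop) (y : ℝ), y ^ Nat.card {i : V // P i} = ∏ v, if P v then y else 1 := by
    intro P y
    rw [Finset.prod_ite]
    simp [Fintype.card_subtype]
  rw [h, h, ← Finset.prod_mul_distrib]
  apply Finset.prod_congr rfl
  intro v _
  unfold wt
  by_cases hA : v ∈ A <;> simp [hA]

theorem permTutte_swap {V : Type*} [Fintype V] [DecidableEq V]
    (G : SimpleGraph V) (A : Set V) (x : ℝ) :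
    permTutte G A 0 x = permTutte G Aᶜ x 0 := by
  unfold permTutte
  congr 1
  apply Finset.sum_congr rfl
  intro π _
  rw [mul_comm]
  simp

theorem permTutte_mono {V : Type*} [Fintype V] [DecidableEq V]
    (G : SimpleGraph V) (A : Set V) (x y : ℝ) (hx : 1 ≤ x) (hxy : x ≤ y) :
    permTutte G A x 0 ≤ permTutte G A y 0 := by
  rw [permTutte_eq, permTutte_eq]
  apply mul_le_mul_of_nonneg_left _ (by positivity)
  apply Finset.sum_le_sum
  intro π _
  apply Finset.prod_le_prod
  · intro v _; exact wt_nonneg G A x hx _ v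
  · intro v _; unfold wt; split_ifs <;> linarith

theorem permTutte_nonneg {V : Type*} [Fintype V] [DecidableEq V]
    (G : SimpleGraph V) (A : Set V) (x : ℝ) (hx : 1 ≤ x) :
    0 ≤ permTutte G A x 0 := by
  rw [permTutte_eq]
  apply mul_nonneg (by positivity)
  exact Finset.sum_nonneg fun π _ => Finset.prod_nonneg fun v _ => wt_nonneg G A x hx _ v

theorem wt_comp {V β γ : Type*} [LinearOrder β] [LinearOrder γ] (G : SimpleGraph V) (A : Set V) (x : ℝ)
    (e : β → γ) (he : StrictMono e) (f : V → β) (v : V) :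
    wt G A x (fun v => e (f v)) v = wt G A x f v := by
  unfold wt; simp only [he.lt_iff_lt]

theorem disc_le {V : Type*} [Fintype V] [DecidableEq V]
    (G : SimpleGraph V) (A : Set V) (x : ℝ) (hx : 1 ≤ x) (N : ℕ) :
    ∑ f : V → Fin N, ∏ v, wt G A x f v ≤
      (N:ℝ)^(Fintype.card V) * permTutte G A x 0
        + x^(Fintype.card V) * ((N:ℝ)^(Fintype.card V) - N.descFactorial (Fintype.card V)) := by
  set n := Fintype.card V with hn
  have hnn : ∀ f : V → Fin N, 0 ≤ ∏ v, wt G A x f v := fun f =>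
    Finset.prod_nonneg fun v _ => wt_nonneg G A x hx _ v
  rw [← Finset.sum_filter_add_sum_filter_not Finset.univ (fun f : V → Fin N => Function.Injective f)]
  apply add_le_add
  · have hex : ∀ f : V → Fin N, Function.Injective f →
        ∃ q : (V ≃ Fin n) × {s : Finset (Fin N) // s.card = n},
          f = fun v => q.2.1.orderEmbOfFin q.2.2 (q.1 v) := by
      intro f hf
      have hcard : (Finset.univ.image f).card = n := by
        rw [Finset.card_image_of_injective _ hf, Finset.card_univ]
      let π : V → Fin n := fun v =>
        ((Finset.univ.image f).orderIsoOfFin hcard).symm ⟨f v, Finset.mem_image_of_mem f (Finset.mem_univ v)⟩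
      have hπ : Function.Injective π := by
        intro a b hab
        have := ((Finset.univ.image f).orderIsoOfFin hcard).symm.injective hab
        exact hf (by simpa using this)
      have hb : Function.Bijective π := (Fintype.bijective_iff_injective_and_card π).2 ⟨hπ, by simp [hn]⟩
      refine ⟨(Equiv.ofBijective π hb, ⟨_, hcard⟩), ?_⟩
      funext v
      simp only [Equiv.ofBijective_apply, π]
      rw [← Finset.coe_orderIsoOfFin_apply]
      simp
    by_cases hne : ∃ f : V → Fin N, Function.Injective f
    swap
    · rw [Finset.filter_false_of_mem (by intro f _ hf; exact hne ⟨f, hf⟩), Finset.sum_empty]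
      exact mul_nonneg (by positivity) (permTutte_nonneg G A x hx)
    haveI : Nonempty ((V ≃ Fin n) × {s : Finset (Fin N) // s.card = n}) := by
      obtain ⟨f, hf⟩ := hne
      obtain ⟨q, _⟩ := hex f hf
      exact ⟨q⟩
    choose! Ψ hΨ using hex
    have hinj : Set.InjOn Ψ (Finset.univ.filter (fun f : V → Fin N => Function.Injective f)) := by
      intro f hf g hg hfg
      rw [hΨ f (by simpa using hf), hΨ g (by simpa using hg), hfg]
    have h1 : ∑ f ∈ Finset.univ.filter (fun f : V → Fin N => Function.Injective f), ∏ v, wt G A x f v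
        = ∑ f ∈ Finset.univ.filter (fun f : V → Fin N => Function.Injective f), ∏ v, wt G A x (Ψ f).1 v := by
      apply Finset.sum_congr rfl
      intro f hf
      have := hΨ f (by simpa using hf)
      apply Finset.prod_congr rfl
      intro v _
      conv_lhs => rw [this]
      exact wt_comp G A x _ (Finset.orderEmbOfFin _ _).strictMono _ v
    rw [h1, ← Finset.sum_image (f := fun q : (V ≃ Fin n) × {s : Finset (Fin N) // s.card = n} => ∏ v, wt G A x q.1 v) hinj]
    refine le_trans (Finset.sum_le_sum_of_subset_of_nonneg (Finset.subset_univ _) ?_) ?_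
    · intro q _ _
      exact Finset.prod_nonneg fun v _ => wt_nonneg G A x hx _ v
    · rw [Fintype.sum_prod_type]
      simp only [Finset.sum_const, Finset.card_univ, Fintype.card_finset_len, Fintype.card_fin, nsmul_eq_mul]
      rw [← Finset.mul_sum, permTutte_eq, ← mul_assoc]
      apply mul_le_mul_of_nonneg_right
      · exact Nat.choose_le_pow_div n N
      · exact Finset.sum_nonneg fun π _ => Finset.prod_nonneg fun v _ => wt_nonneg G A x hx _ v
  · have hc : (Finset.univ.filter (fun f : V → Fin N => Function.Injective f)).card = N.descFactorial n := by
      rw [← Fintype.card_subtype, Fintype.card_congr (Equiv.subtypeInjectiveEquivEmbedding V (Fin N)),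
        Fintype.card_embedding_eq]
      simp [hn]
    have hc2 : ((Finset.univ.filter (fun f : V → Fin N => ¬ Function.Injective f)).card : ℝ) = (N:ℝ)^n - N.descFactorial n := by
      have := Finset.card_filter_add_card_filter_not (s := (Finset.univ : Finset (V → Fin N))) (fun f : V → Fin N => Function.Injective f)
      rw [hc] at this
      simp only [Finset.card_univ, Fintype.card_fun, Fintype.card_fin, ← hn] at this
      have h2 : (N:ℝ)^n = ((N^n : ℕ):ℝ) := by push_cast; rfl
      rw [h2, ← this]; push_cast; ring
    rw [← hc2, mul_comm, ← nsmul_eq_mul]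
    apply Finset.sum_le_card_nsmul
    intro f _
    calc ∏ v, wt G A x f v ≤ ∏ v : V, x := Finset.prod_le_prod (fun v _ => wt_nonneg G A x hx _ v) (fun v _ => wt_le G A x hx _ v)
      _ = x^n := by simp [hn]

theorem wt_mono {V β : Type*} [LinearOrder β] (G : SimpleGraph V) (A : Set V) (hbip : IsBipartition G A)
    (x : ℝ) (hx : 1 ≤ x) (f f' : V → β) (h1 : ∀ v ∈ A, f v ≤ f' v) (h2 : ∀ v, v ∉ A → f' v ≤ f v) (v : V) :
    wt G A x f v ≤ wt G A x f' v := by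
  unfold wt
  by_cases hv : v ∈ A
  · have : (∀ j, G.Adj v j → f j < f v) → (∀ j, G.Adj v j → f' j < f' v) := by
      intro h j hj
      have hjA := (hbip v j hj).1 hv
      exact lt_of_le_of_lt (h2 j hjA) (lt_of_lt_of_le (h j hj) (h1 v hv))
    simp only [hv, if_true]
    split_ifs with ha hb hb
    · exact le_rfl
    · exact absurd (this ha) hb
    · exact hx
    · exact le_rfl
  · have : (∀ j, G.Adj v j → f' j < f' v) → (∀ j, G.Adj v j → f j < f v) := by
      intro h j hj
      have hjA : j ∈ A := by by_contra hc; exact hv ((hbip v j hj).2 hc)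
      exact lt_of_le_of_lt (h1 j hjA) (lt_of_lt_of_le (h j hj) (h2 v hv))
    simp only [hv, if_false]
    split_ifs with ha hb hb
    · exact le_rfl
    · norm_num
    · exact absurd (this hb) ha
    · exact le_rfl

theorem group_prod {V : Type*} [Fintype V] [DecidableEq V] (G : SimpleGraph V) (L : Set V) (c : V → V)
    (hL : ∀ j ∈ L, c j ∉ L ∧ ∀ v, G.Adj j v ↔ v = c j) (w : V → ℝ) :
    ∏ v, w v = ∏ i ∈ Finset.univ.filter (fun i => i ∉ L),
      (w i * ∏ v ∈ Finset.univ.filter (fun v => G.Adj i v ∧ v ∈ L), w v) := by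
  rw [Finset.prod_mul_distrib, ← Finset.prod_filter_mul_prod_filter_not Finset.univ (fun v => v ∉ L)]
  congr 1
  have : (Finset.univ.filter (fun v => ¬ v ∉ L)) = Finset.univ.filter (fun v => v ∈ L) := by
    ext v; simp
  rw [this, ← Finset.prod_fiberwise_of_maps_to (g := c) (t := Finset.univ.filter (fun i => i ∉ L))]
  · apply Finset.prod_congr rfl
    intro i hi
    apply Finset.prod_congr _ (fun _ _ => rfl)
    ext v
    simp only [Finset.mem_filter, Finset.mem_univ, true_and]
    constructor
    · rintro ⟨hv, rfl⟩
      exact ⟨(((hL v hv).2 _).2 rfl).symm, hv⟩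
    · rintro ⟨ha, hv⟩
      exact ⟨hv, (((hL v hv).2 _).1 ha.symm).symm⟩
  · intro v hv
    simp only [Finset.mem_filter, Finset.mem_univ, true_and] at hv ⊢
    exact (hL v hv).1

theorem sum_lt (N m : ℕ) (a : ℝ) (hm : m ≤ N) : ∑ u : Fin N, (if u.val < m then a else 0) = m * a := by
  rw [Fin.sum_univ_eq_sum_range (fun u => if u < m then a else 0) N, ← Finset.sum_filter]
  have : (Finset.range N).filter (fun u => u < m) = Finset.range m := by
    ext u; simp; omega
  rw [this]; simp

noncomputable def pw {V : Type*} (A L : Set V) (N S : ℕ) (v : V) (u : Fin N) : ℝ :=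
  if v ∉ A ∧ v ∉ L then (if u.val < S then 1/(S:ℝ) else 0) else 1/(N:ℝ)

theorem pw_sum {V : Type*} (A L : Set V) (N S : ℕ) (hS : 0 < S) (hSN : S ≤ N) (v : V) :
    ∑ u, pw A L N S v u = 1 := by
  unfold pw
  have hN : (N:ℝ) ≠ 0 := by have : 0 < N := by omega
                            positivity
  have hS' : (S:ℝ) ≠ 0 := by positivity
  split_ifs
  · rw [sum_lt _ _ _ hSN]; field_simp
  · simp; field_simp

theorem pw_nonneg {V : Type*} (A L : Set V) (N S : ℕ) (v : V) (u : Fin N) :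
    0 ≤ pw A L N S v u := by
  unfold pw; split_ifs <;> positivity

noncomputable def E1 (x : ℝ) (k d N S : ℕ) : ℝ :=
  (1/(N:ℝ)) * ∑ t ∈ Finset.range N, (((t:ℝ)/N)^k + (x-1) * (((t:ℝ)/N)^k * (((min t S : ℕ):ℝ)/S)^d))
noncomputable def E2 (x : ℝ) (k d N S : ℕ) : ℝ :=
  (1/(N:ℝ)) * ∑ t ∈ Finset.range S, ((((t:ℝ)+1+x*(N-1-t))/N)^k - ((t:ℝ)/N)^(k+d))

section
variable {V : Type*} [Fintype V] [DecidableEq V] (G : SimpleGraph V) (A L : Set V) (c : V → V)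
    (hbip : IsBipartition G A)
    (hL : ∀ j ∈ L, c j ∉ L ∧ ∀ v, G.Adj j v ↔ v = c j) (x : ℝ) (hx : 1 ≤ x)
    (N S : ℕ) (hS : 0 < S) (hSN : S ≤ N)

noncomputable def KK (G : SimpleGraph V) (L : Set V) (i : V) : Finset V := Finset.univ.filter (fun v => G.Adj i v ∧ v ∈ L)
noncomputable def DD (G : SimpleGraph V) (L : Set V) (i : V) : Finset V := Finset.univ.filter (fun v => G.Adj i v ∧ v ∉ L)

noncomputable def gg (G : SimpleGraph V) (A L : Set V) (x : ℝ) (N : ℕ) (i : V) (f : V → Fin N) : ℝ :=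
  wt G A x f i * ∏ v ∈ KK G L i, wt G A x f v

include hL in
theorem leaf_wt (i v : V) (hv : v ∈ KK G L i) (f : V → Fin N) :
    wt G A x f v = if f i < f v then (if v ∈ A then x else 0) else 1 := by
  simp only [KK, Finset.mem_filter, Finset.mem_univ, true_and] at hv
  have hi : i = c v := ((hL v hv.2).2 i).1 hv.1.symm
  unfold wt
  simp only [(hL v hv.2).2]
  simp [hi]

theorem act_prod (i : V) (f : V → Fin N) :
    (if ∀ j, G.Adj i j → f j < f i then (1:ℝ) else 0) =
      ∏ v ∈ KK G L i ∪ DD G L i, if f v < f i then 1 else 0 := by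
  rw [Finset.prod_ite_zero]
  simp only [Finset.prod_const_one]
  congr 1
  simp only [KK, DD, Finset.mem_union, Finset.mem_filter, Finset.mem_univ, true_and, eq_iff_iff]
  constructor
  · rintro h j (hj | hj) <;> exact h j hj.1
  · intro h j hj
    by_cases hjL : j ∈ L
    · exact h j (Or.inl ⟨hj, hjL⟩)
    · exact h j (Or.inr ⟨hj, hjL⟩)

theorem KD_disj (i : V) : Disjoint (KK G L i) (DD G L i) := by
  rw [Finset.disjoint_left]; intro v; simp only [KK, DD, Finset.mem_filter]; tauto

include hL hbip in
theorem gg1 (i : V) (hi : i ∈ A) (f : V → Fin N) :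
    gg G A L x N i f = (∏ v ∈ KK G L i, if f i < f v then 0 else 1) +
      (x-1) * ∏ v ∈ KK G L i ∪ DD G L i, if f v < f i then 1 else 0 := by
  have h1 : ∏ v ∈ KK G L i, wt G A x f v = ∏ v ∈ KK G L i, if f i < f v then 0 else 1 := by
    apply Finset.prod_congr rfl
    intro v hv
    rw [leaf_wt G A L c hL x N i v hv]
    have : v ∉ A := by
      simp only [KK, Finset.mem_filter, Finset.mem_univ, true_and] at hv
      exact (hbip i v hv.1).1 hi
    simp [this]
  rw [gg, h1, ← act_prod]
  unfold wt
  simp only [hi, if_true]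
  split_ifs with h
  · rw [Finset.prod_eq_one]
    · ring
    · intro v hv
      simp only [KK, Finset.mem_filter, Finset.mem_univ, true_and] at hv
      rw [if_neg]; exact not_lt.2 (h v hv.1).le
  · simp

include hL hbip in
theorem gg2 (i : V) (hi : i ∉ A) (f : V → Fin N) :
    gg G A L x N i f = (∏ v ∈ KK G L i, if f i < f v then x else 1) -
      ∏ v ∈ KK G L i ∪ DD G L i, if f v < f i then 1 else 0 := by
  have h1 : ∏ v ∈ KK G L i, wt G A x f v = ∏ v ∈ KK G L i, if f i < f v then x else 1 := by
    apply Finset.prod_congr rfl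
    intro v hv
    rw [leaf_wt G A L c hL x N i v hv]
    have : v ∈ A := by
      simp only [KK, Finset.mem_filter, Finset.mem_univ, true_and] at hv
      by_contra hc
      exact hi ((hbip i v hv.1).2 hc)
    simp [this]
  rw [gg, h1, ← act_prod]
  unfold wt
  simp only [hi, if_false]
  split_ifs with h
  · rw [Finset.prod_eq_one]
    · ring
    · intro v hv
      simp only [KK, Finset.mem_filter, Finset.mem_univ, true_and] at hv
      rw [if_neg]; exact not_lt.2 (h v hv.1).le
  · simp

theorem KD_not (i : V) : i ∉ KK G L i ∪ DD G L i := by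
  simp [KK, DD]

theorem K_not (i : V) : i ∉ KK G L i := by
  simp [KK]

theorem pw_leaf (i v : V) (hv : v ∈ KK G L i) (u : Fin N) : pw A L N S v u = 1/(N:ℝ) := by
  simp only [KK, Finset.mem_filter, Finset.mem_univ, true_and] at hv
  simp [pw, hv.2]

theorem sum_unif_lt (t : Fin N) : ∑ u : Fin N, (1/(N:ℝ)) * (if u < t then 1 else 0) = (t:ℝ)/N := by
  have := sum_lt N t.val (1/(N:ℝ)) t.2.le
  simp only [mul_ite, mul_one, mul_zero, Fin.lt_def]
  rw [this]; ring

theorem sum_unif_le (t : Fin N) (y : ℝ) : ∑ u : Fin N, (1/(N:ℝ)) * (if t < u then y else 1) = ((t:ℝ)+1+y*(N-1-t))/N := by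
  have := sum_lt N (t.val+1) ((1-y)/(N:ℝ)) t.2
  have h2 : ∀ u : Fin N, (1/(N:ℝ)) * (if t < u then y else 1) = y/N + (if u.val < t.val+1 then ((1-y)/(N:ℝ)) else 0) := by
    intro u
    by_cases h : t < u
    · have : ¬ (u.val < t.val+1) := by have := Fin.lt_def.1 h; omega
      simp only [h, this, if_true, if_false]; ring
    · have : (u.val < t.val+1) := by have := Fin.lt_def.not.1 h; omega
      simp only [h, this, if_true, if_false]; ring
  have hN : (N:ℝ) ≠ 0 := by
    have := t.pos
    positivity
  simp_rw [h2]
  rw [Finset.sum_add_distrib, this]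
  simp
  field_simp
  ring

include hSN in
theorem sum_trunc_lt (t : Fin N) : ∑ u : Fin N, (if u.val < S then 1/(S:ℝ) else 0) * (if u < t then 1 else 0) = ((min t.val S:ℕ):ℝ)/S := by
  have := sum_lt N (min t.val S) (1/(S:ℝ)) (by omega)
  have h2 : ∀ u : Fin N, (if u.val < S then 1/(S:ℝ) else 0) * (if u < t then 1 else 0) = (if u.val < min t.val S then (1/(S:ℝ)) else 0) := by
    intro u
    simp only [lt_min_iff, Fin.lt_def]
    split_ifs <;> simp_all
  simp_rw [h2]
  rw [this]; ring

include hL hbip hx hS hSN in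
theorem exp1 (i : V) (hi : i ∈ A) :
    E1 x (KK G L i).card (DD G L i).card N S ≤ ∑ f : V → Fin N, (∏ v, pw A L N S v (f v)) * gg G A L x N i f := by
  have hps := pw_sum A L N S hS hSN
  simp_rw [gg1 G A L c hbip hL x N i hi, mul_add, mul_left_comm _ (x-1) _]
  rw [Finset.sum_add_distrib, ← Finset.mul_sum,
    expect (pw A L N S) hps i (KK G L i) (K_not G L i) (fun v t u => if t < u then 0 else 1),
    expect (pw A L N S) hps i (KK G L i ∪ DD G L i) (KD_not G L i) (fun v t u => if u < t then 1 else 0)]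
  have hpi : ∀ t, pw A L N S i t = 1/(N:ℝ) := by intro t; simp [pw, hi]
  have hD : ∀ v ∈ DD G L i, ∀ u, pw A L N S v u = (if u.val < S then 1/(S:ℝ) else 0) := by
    intro v hv u
    simp only [DD, Finset.mem_filter, Finset.mem_univ, true_and] at hv
    have := (hbip i v hv.1).1 hi
    simp [pw, hv.2, this]
  rw [Finset.mul_sum, ← Finset.sum_add_distrib, E1, ← Fin.sum_univ_eq_sum_range (fun t => (((t:ℝ)/N)^(KK G L i).card + (x-1) * (((t:ℝ)/N)^(KK G L i).card * (((min t S : ℕ):ℝ)/S)^(DD G L i).card))), Finset.mul_sum]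
  apply Finset.sum_le_sum
  intro t _
  rw [hpi, Finset.prod_union (KD_disj G L i)]
  have a1 : ∏ v ∈ KK G L i, ∑ u, pw A L N S v u * (if t < u then 0 else 1) = (((t:ℝ)+1)/N)^(KK G L i).card := by
    rw [← Finset.prod_const]
    apply Finset.prod_congr rfl
    intro v hv
    simp_rw [pw_leaf G A L N S i v hv]
    rw [sum_unif_le]; ring
  have a2 : ∏ v ∈ KK G L i, ∑ u, pw A L N S v u * (if u < t then 1 else 0) = ((t:ℝ)/N)^(KK G L i).card := by
    rw [← Finset.prod_const]
    apply Finset.prod_congr rfl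
    intro v hv
    simp_rw [pw_leaf G A L N S i v hv]
    rw [sum_unif_lt]
  have a3 : ∏ v ∈ DD G L i, ∑ u, pw A L N S v u * (if u < t then 1 else 0) = (((min t.val S:ℕ):ℝ)/S)^(DD G L i).card := by
    rw [← Finset.prod_const]
    apply Finset.prod_congr rfl
    intro v hv
    simp_rw [hD v hv]
    rw [sum_trunc_lt N S hSN]
  rw [a1, a2, a3, mul_add]
  apply add_le_add
  · gcongr; linarith
  · apply le_of_eq; ring

include hL hbip hS hSN in
theorem exp2 (i : V) (hi : i ∉ A) (hiL : i ∉ L) :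
    E2 x (KK G L i).card (DD G L i).card N S = (S/N:ℝ) * ∑ f : V → Fin N, (∏ v, pw A L N S v (f v)) * gg G A L x N i f := by
  have hps := pw_sum A L N S hS hSN
  simp_rw [gg2 G A L c hbip hL x N i hi, mul_sub]
  rw [Finset.sum_sub_distrib,
    expect (pw A L N S) hps i (KK G L i) (K_not G L i) (fun v t u => if t < u then x else 1),
    expect (pw A L N S) hps i (KK G L i ∪ DD G L i) (KD_not G L i) (fun v t u => if u < t then 1 else 0)]
  have hpi : ∀ t, pw A L N S i t = (if t.val < S then 1/(S:ℝ) else 0) := by intro t; simp [pw, hi, hiL]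
  have hD : ∀ v ∈ DD G L i, ∀ u, pw A L N S v u = 1/(N:ℝ) := by
    intro v hv u
    simp only [DD, Finset.mem_filter, Finset.mem_univ, true_and] at hv
    have : v ∈ A := by by_contra hc; exact hi ((hbip i v hv.1).2 hc)
    simp [pw, this]
  set k := (KK G L i).card with hk
  set d := (DD G L i).card with hd
  have hr : ∑ t ∈ Finset.range S, ((((t:ℝ)+1+x*(N-1-t))/N)^k - ((t:ℝ)/N)^(k+d)) =
      ∑ t : Fin N, if t.val < S then ((((t:ℝ)+1+x*(N-1-t))/N)^k - ((t:ℝ)/N)^(k+d)) else 0 := by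
    rw [Fin.sum_univ_eq_sum_range (fun t => if t < S then ((((t:ℝ)+1+x*(N-1-t))/N)^k - ((t:ℝ)/N)^(k+d)) else 0), ← Finset.sum_filter]
    apply Finset.sum_congr _ (fun _ _ => rfl)
    ext t; simp; omega
  rw [E2, hr, ← Finset.sum_sub_distrib, Finset.mul_sum, Finset.mul_sum]
  apply Finset.sum_congr rfl
  intro t _
  rw [hpi, Finset.prod_union (KD_disj G L i)]
  have a1 : ∏ v ∈ KK G L i, ∑ u, pw A L N S v u * (if t < u then x else 1) = (((t:ℝ)+1+x*(N-1-t))/N)^k := by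
    rw [hk, ← Finset.prod_const]
    apply Finset.prod_congr rfl
    intro v hv
    simp_rw [pw_leaf G A L N S i v hv]
    rw [sum_unif_le]
  have a2 : ∏ v ∈ KK G L i, ∑ u, pw A L N S v u * (if u < t then 1 else 0) = ((t:ℝ)/N)^k := by
    rw [hk, ← Finset.prod_const]
    apply Finset.prod_congr rfl
    intro v hv
    simp_rw [pw_leaf G A L N S i v hv]
    rw [sum_unif_lt]
  have a3 : ∏ v ∈ DD G L i, ∑ u, pw A L N S v u * (if u < t then 1 else 0) = ((t:ℝ)/N)^d := by
    rw [hd, ← Finset.prod_const]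
    apply Finset.prod_congr rfl
    intro v hv
    simp_rw [hD v hv]
    rw [sum_unif_lt]
  rw [a1, a2, a3]
  have hS' : (S:ℝ) ≠ 0 := by positivity
  split_ifs
  · field_simp
    try ring
  · ring

include hL hbip hx hS hSN in
theorem disc_ge :
    ∏ i ∈ Finset.univ.filter (fun i => i ∉ L), max 0 (if i ∈ A then E1 x (KK G L i).card (DD G L i).card N S else E2 x (KK G L i).card (DD G L i).card N S)
     ≤ (1/(N:ℝ))^(Fintype.card V) * ∑ f : V → Fin N, ∏ v, wt G A x f v := by
  have hps := pw_sum A L N S hS hSN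
  have hpn := pw_nonneg A L N S
  have hg0 : ∀ i f, 0 ≤ gg G A L x N i f := fun i f =>
    mul_nonneg (wt_nonneg G A x hx _ _) (Finset.prod_nonneg fun v _ => wt_nonneg G A x hx _ _)
  have hE0 : ∀ i, 0 ≤ ∑ f : V → Fin N, (∏ v, pw A L N S v (f v)) * gg G A L x N i f := fun i =>
    Finset.sum_nonneg fun f _ => mul_nonneg (Finset.prod_nonneg fun v _ => hpn _ _) (hg0 _ _)
  have hH := harris A (pw A L N S) hpn hps (gg G A L x N) hg0 (by
    intro i f f' h1 h2
    unfold gg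
    apply mul_le_mul (wt_mono G A hbip x hx f f' h1 h2 i) _ (Finset.prod_nonneg fun v _ => wt_nonneg G A x hx _ _) (wt_nonneg G A x hx _ _)
    exact Finset.prod_le_prod (fun v _ => wt_nonneg G A x hx _ _) (fun v _ => wt_mono G A hbip x hx f f' h1 h2 v)) (Finset.univ.filter (fun i => i ∉ L))
  have hN : 0 < (N:ℝ) := by have : 0 < N := by omega
                            positivity
  have hS' : 0 < (S:ℝ) := by positivity
  let cv : V → ℝ := fun v => if v ∉ A ∧ v ∉ L then (S/N:ℝ) else 1
  have hcv : ∀ v, 0 ≤ cv v := by intro v; simp only [cv]; split_ifs <;> positivity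
  have hcp : ∏ v, cv v = ∏ i ∈ Finset.univ.filter (fun i => i ∉ L), cv i := by
    rw [Finset.prod_filter]
    apply Finset.prod_congr rfl
    intro v _
    by_cases h : v ∈ L <;> simp [h, cv]
  have step1 : (∏ v, cv v) * ∑ f : V → Fin N, (∏ v, pw A L N S v (f v)) * ∏ i ∈ Finset.univ.filter (fun i => i ∉ L), gg G A L x N i f ≤ (1/(N:ℝ))^(Fintype.card V) * ∑ f : V → Fin N, ∏ v, wt G A x f v := by
    rw [Finset.mul_sum, Finset.mul_sum]
    apply Finset.sum_le_sum
    intro f _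
    have : ∏ i ∈ Finset.univ.filter (fun i => i ∉ L), gg G A L x N i f = ∏ v, wt G A x f v :=
      (group_prod G L c hL (wt G A x f)).symm
    rw [this, ← mul_assoc]
    apply mul_le_mul_of_nonneg_right _ (Finset.prod_nonneg fun v _ => wt_nonneg G A x hx _ _)
    rw [← Finset.prod_mul_distrib, ← Finset.card_univ, ← Finset.prod_const]
    apply Finset.prod_le_prod
    · intro v _; exact mul_nonneg (hcv v) (hpn _ _)
    · intro v _
      simp only [cv, pw]
      split_ifs
      · apply le_of_eq; field_simp
      · rw [mul_zero]; positivity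
      · rw [one_mul]
  refine le_trans ?_ step1
  refine le_trans ?_ (mul_le_mul_of_nonneg_left hH (Finset.prod_nonneg fun v _ => hcv v))
  rw [hcp, ← Finset.prod_mul_distrib]
  apply Finset.prod_le_prod
  · intro i _; exact le_max_left _ _
  · intro i hi
    simp only [Finset.mem_filter, Finset.mem_univ, true_and] at hi
    apply max_le (mul_nonneg (hcv i) (hE0 i))
    by_cases hA : i ∈ A
    · simp only [hA, cv, if_true, not_true, false_and, if_false, one_mul]
      exact exp1 G A L c hbip hL x hx N S hS hSN i hA
    · simp only [hA, cv, hi, if_false, not_false_iff, and_self, if_true]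
      exact (exp2 G A L c hbip hL x N S hS hSN i hA hi).le
end

open Filter Topology in
theorem pow_diff (p : ℕ) (a b : ℝ) (hb : 0 ≤ b) (hab : b ≤ a) :
    ((p:ℝ)+1) * b^p * (a-b) ≤ a^(p+1) - b^(p+1) ∧ a^(p+1) - b^(p+1) ≤ ((p:ℝ)+1) * a^p * (a-b) := by
  induction p with
  | zero => simp
  | succ p ih =>
    obtain ⟨h1, h2⟩ := ih
    have hpow : b^(p+1) ≤ a^(p+1) := pow_le_pow_left₀ hb hab _
    have hd : 0 ≤ a - b := by linarith
    have e1 : a^(p+1+1) - b^(p+1+1) = b*(a^(p+1)-b^(p+1)) + a^(p+1)*(a-b) := by ring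
    have e2 : a^(p+1+1) - b^(p+1+1) = a*(a^(p+1)-b^(p+1)) + b^(p+1)*(a-b) := by ring
    have m1 := mul_le_mul_of_nonneg_left h1 hb
    have m2 := mul_le_mul_of_nonneg_left h2 (hb.trans hab)
    have m3 := mul_le_mul_of_nonneg_right hpow hd
    push_cast
    constructor
    · rw [e1]
      have : ((p:ℝ)+1+1)*b^(p+1)*(a-b) = b*(((p:ℝ)+1) * b^p * (a-b)) + b^(p+1)*(a-b) := by ring
      linarith
    · rw [e2]
      have : ((p:ℝ)+1+1)*a^(p+1)*(a-b) = a*(((p:ℝ)+1) * a^p * (a-b)) + a^(p+1)*(a-b) := by ring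
      linarith

noncomputable def rho (p M : ℕ) : ℝ := (∑ t ∈ Finset.range M, (t:ℝ)^p) / (M:ℝ)^(p+1)

theorem psum_bounds (p M : ℕ) : ((p:ℝ)+1) * ∑ t ∈ Finset.range M, (t:ℝ)^p ≤ (M:ℝ)^(p+1) ∧
    (M:ℝ)^(p+1) ≤ ((p:ℝ)+1) * (∑ t ∈ Finset.range M, (t:ℝ)^p + (M:ℝ)^p) := by
  have tel : ∑ t ∈ Finset.range M, (((t:ℝ)+1)^(p+1) - (t:ℝ)^(p+1)) = (M:ℝ)^(p+1) := by
    have := Finset.sum_range_sub (fun t : ℕ => (t:ℝ)^(p+1)) M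
    push_cast at this
    rw [this]; simp
  have sh : ∑ t ∈ Finset.range M, ((t:ℝ)+1)^p ≤ ∑ t ∈ Finset.range M, (t:ℝ)^p + (M:ℝ)^p := by
    have h1 := Finset.sum_range_succ (fun t : ℕ => (t:ℝ)^p) M
    have h2 := Finset.sum_range_succ' (fun t : ℕ => (t:ℝ)^p) M
    push_cast at h2
    have : (0:ℝ) ≤ (0:ℝ)^p := by positivity
    linarith
  constructor
  · rw [← tel, Finset.mul_sum]
    apply Finset.sum_le_sum
    intro t _
    have := (pow_diff p ((t:ℝ)+1) t (by positivity) (by linarith)).1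
    simpa using this
  · refine le_trans ?_ (mul_le_mul_of_nonneg_left sh (by positivity))
    rw [← tel, Finset.mul_sum]
    apply Finset.sum_le_sum
    intro t _
    have := (pow_diff p ((t:ℝ)+1) t (by positivity) (by linarith)).2
    simpa using this

open Filter Topology in
theorem rho_tendsto (p : ℕ) : Tendsto (rho p) atTop (𝓝 (1/((p:ℝ)+1))) := by
  have hlow : Tendsto (fun M : ℕ => 1/((p:ℝ)+1) - 1/(M:ℝ)) atTop (𝓝 (1/((p:ℝ)+1))) := by
    simpa using tendsto_const_nhds.sub (tendsto_one_div_atTop_nhds_zero_nat (𝕜 := ℝ))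
  refine tendsto_of_tendsto_of_tendsto_of_le_of_le' hlow tendsto_const_nhds ?_ ?_
  · filter_upwards [eventually_gt_atTop 0] with M hM
    have hM' : (0:ℝ) < M := by exact_mod_cast hM
    have := (psum_bounds p M).2
    unfold rho
    rw [le_div_iff₀ (by positivity), sub_mul, sub_le_iff_le_add]
    have e : 1/(M:ℝ) * (M:ℝ)^(p+1) = (M:ℝ)^p := by rw [pow_succ]; field_simp
    rw [e, div_mul_eq_mul_div, one_mul, div_le_iff₀ (by positivity)]
    linarith
  · filter_upwards [eventually_gt_atTop 0] with M hM
    have hM' : (0:ℝ) < M := by exact_mod_cast hM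
    have := (psum_bounds p M).1
    unfold rho
    rw [div_le_div_iff₀ (by positivity) (by positivity)]
    linarith

theorem rho_sum (p M N : ℕ) (hM : 0 < M) (hN : 0 < N) :
    (1/(N:ℝ)) * ∑ t ∈ Finset.range M, ((t:ℝ)/N)^p = ((M:ℝ)/N)^(p+1) * rho p M := by
  unfold rho
  simp_rw [div_pow]
  rw [← Finset.sum_div, pow_succ (N:ℝ)]
  field_simp

theorem E1_eq (x : ℝ) (k d m : ℕ) (hm : 0 < m) :
    E1 x k d (8*m) (7*m) = rho k (8*m) + (x-1) * (rho k (8*m) - (7/8)^(k+1) * rho k (7*m) + (7/8)^(k+1) * rho (k+d) (7*m)) := by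
  unfold E1
  have hq : (((7*m:ℕ):ℝ)/((8*m:ℕ):ℝ)) = 7/8 := by push_cast; field_simp
  have hq1 : (((8*m:ℕ):ℝ)/((8*m:ℕ):ℝ)) = 1 := by push_cast; field_simp
  have r1 := rho_sum k (8*m) (8*m) (by omega) (by omega)
  have r2 := rho_sum k (7*m) (8*m) (by omega) (by omega)
  have r3 := rho_sum (k+d) (7*m) (8*m) (by omega) (by omega)
  rw [hq1, one_pow, one_mul] at r1
  rw [hq] at r2 r3
  have hsplit : ∀ F : ℕ → ℝ, ∑ t ∈ Finset.range (8*m), F t = ∑ t ∈ Finset.range (7*m), F t + ∑ t ∈ Finset.Ico (7*m) (8*m), F t := by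
    intro F; rw [Finset.range_eq_Ico, Finset.range_eq_Ico, Finset.sum_Ico_consecutive _ (by omega) (by omega)]
  have s1 : ∑ t ∈ Finset.range (7*m), (((t:ℝ)/((8*m:ℕ):ℝ))^k * (((min t (7*m) : ℕ):ℝ)/((7*m:ℕ):ℝ))^d)
      = (8/7:ℝ)^d * ∑ t ∈ Finset.range (7*m), ((t:ℝ)/((8*m:ℕ):ℝ))^(k+d) := by
    rw [Finset.mul_sum]
    apply Finset.sum_congr rfl
    intro t ht
    rw [min_eq_left (Finset.mem_range.1 ht).le, pow_add, mul_left_comm, ← mul_pow]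
    congr 2
    push_cast; field_simp
  have s2 : ∑ t ∈ Finset.Ico (7*m) (8*m), (((t:ℝ)/((8*m:ℕ):ℝ))^k * (((min t (7*m) : ℕ):ℝ)/((7*m:ℕ):ℝ))^d)
      = ∑ t ∈ Finset.range (8*m), ((t:ℝ)/((8*m:ℕ):ℝ))^k - ∑ t ∈ Finset.range (7*m), ((t:ℝ)/((8*m:ℕ):ℝ))^k := by
    rw [hsplit (fun t => ((t:ℝ)/((8*m:ℕ):ℝ))^k), add_sub_cancel_left]
    apply Finset.sum_congr rfl
    intro t ht
    rw [min_eq_right (Finset.mem_Ico.1 ht).1, div_self (by positivity), one_pow, mul_one]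
  rw [Finset.sum_add_distrib, ← Finset.mul_sum, hsplit (fun t => (((t:ℝ)/((8*m:ℕ):ℝ))^k * (((min t (7*m) : ℕ):ℝ)/((7*m:ℕ):ℝ))^d)), s1, s2]
  have h78 : (8/7:ℝ)^d * (7/8)^(k+d+1) = (7/8)^(k+1) := by
    rw [show k+d+1 = d+(k+1) by ring, pow_add _ d, ← mul_assoc, ← mul_pow]; norm_num
  rw [← h78]
  linear_combination (1+(x-1)) * r1 - (x-1)*r2 + (x-1)*(8/7:ℝ)^d * r3 + (x-1) * rho k (7*m) * h78

theorem E2_ge (x : ℝ) (hx : 1 < x) (k d m : ℕ) (hm : 0 < m) :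
    ((1/(8*m:ℝ) + x*(1-1/(8*m:ℝ)))^(k+1) - (7/8+1/(8*m:ℝ) + x*(1-(7/8+1/(8*m:ℝ))))^(k+1))/((x-1)*((k:ℝ)+1))
      - (7/8)^(k+d+1) * rho (k+d) (7*m) ≤ E2 x k d (8*m) (7*m) := by
  unfold E2
  have hq : (((7*m:ℕ):ℝ)/((8*m:ℕ):ℝ)) = 7/8 := by push_cast; field_simp
  have r3 := rho_sum (k+d) (7*m) (8*m) (by omega) (by omega)
  rw [hq] at r3
  rw [Finset.sum_sub_distrib, mul_sub (1/((8*m:ℕ):ℝ)), r3]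
  apply sub_le_sub_right
  have hm' : (0:ℝ) < m := by exact_mod_cast hm
  have hm1 : (1:ℝ) ≤ m := by exact_mod_cast hm
  let a : ℕ → ℝ := fun t => ((t:ℝ)+1)/(8*m) + x*(1-((t:ℝ)+1)/(8*m))
  have tel := Finset.sum_range_sub (fun t : ℕ => -(a t)^(k+1)) (7*m)
  have ha0 : a 0 = (1/(8*m:ℝ) + x*(1-1/(8*m:ℝ))) := by simp [a]
  have haS : a (7*m) = (7/8+1/(8*m:ℝ) + x*(1-(7/8+1/(8*m:ℝ)))) := by
    simp only [a]; push_cast; field_simp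
  rw [← ha0, ← haS, div_le_iff₀ (by apply mul_pos; linarith; positivity)]
  have : a 0 ^ (k+1) - a (7*m)^(k+1) = ∑ t ∈ Finset.range (7*m), (a t ^(k+1) - a (t+1)^(k+1)) := by
    rw [show a 0 ^ (k+1) - a (7*m)^(k+1) = -a (7*m)^(k+1) - -a 0 ^(k+1) by ring, ← tel]
    apply Finset.sum_congr rfl; intros; ring
  rw [this, Finset.mul_sum, Finset.sum_mul]
  apply Finset.sum_le_sum
  intro t ht
  have ht' : (t:ℝ) + 1 ≤ 7*m := by exact_mod_cast Finset.mem_range.1 ht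
  have hdiff : a t - a (t+1) = (x-1)/(8*m) := by simp only [a]; push_cast; field_simp; ring
  have hpos : 0 ≤ a (t+1) := by
    simp only [a]; push_cast
    have : ((t:ℝ)+1+1)/(8*m) ≤ 1 := by rw [div_le_one (by positivity)]; linarith
    have h2 : 0 ≤ ((t:ℝ)+1+1)/(8*m) := by positivity
    nlinarith
  have hle : a (t+1) ≤ a t := by
    have : 0 ≤ (x-1)/(8*m:ℝ) := by apply div_nonneg; linarith; positivity
    linarith
  have h := (pow_diff k (a t) (a (t+1)) hpos hle).2
  rw [hdiff] at h
  refine h.trans (le_of_eq ?_)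
  have : ((t:ℝ)+1+x*(((8*m:ℕ):ℝ)-1-t))/((8*m:ℕ):ℝ) = a t := by
    simp only [a]; push_cast; field_simp; ring
  rw [this]
  push_cast
  field_simp

open Filter Topology in
theorem permTutte_ge {V : Type*} [Fintype V] [DecidableEq V] (G : SimpleGraph V) (A L : Set V) (c : V → V)
    (hbip : IsBipartition G A)
    (hL : ∀ j ∈ L, c j ∉ L ∧ ∀ v, G.Adj j v ↔ v = c j) :
    ∏ i ∈ Finset.univ.filter (fun i => i ∉ L), max 0 (if i ∈ A then e1 (KK G L i).card (DD G L i).card else e2 (KK G L i).card (DD G L i).card)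
     ≤ permTutte G A (471/200) 0 := by
  set x : ℝ := 471/200 with hx
  have hx1 : (1:ℝ) < x := by rw [hx]; norm_num
  let B : ℕ → V → ℝ := fun m i => if i ∈ A then
      E1 x (KK G L i).card (DD G L i).card (8*m) (7*m)
    else ((1/(8*m:ℝ) + x*(1-1/(8*m:ℝ)))^((KK G L i).card+1) - (7/8+1/(8*m:ℝ) + x*(1-(7/8+1/(8*m:ℝ))))^((KK G L i).card+1))/((x-1)*(((KK G L i).card:ℝ)+1))
      - (7/8)^((KK G L i).card+(DD G L i).card+1) * rho ((KK G L i).card+(DD G L i).card) (7*m)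
  have t8 : Tendsto (fun m : ℕ => 8*m) atTop atTop := tendsto_id.const_mul_atTop' (by norm_num)
  have t7 : Tendsto (fun m : ℕ => 7*m) atTop atTop := tendsto_id.const_mul_atTop' (by norm_num)
  have tinv : Tendsto (fun m : ℕ => 1/(8*m:ℝ)) atTop (𝓝 0) := by
    have := (tendsto_one_div_atTop_nhds_zero_nat (𝕜 := ℝ)).comp t8
    refine this.congr ?_
    intro m; simp
  have hB : ∀ i, Tendsto (fun m => B m i) atTop (𝓝 (if i ∈ A then e1 (KK G L i).card (DD G L i).card else e2 (KK G L i).card (DD G L i).card)) := by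
    intro i
    by_cases hA : i ∈ A
    · simp only [B, hA, if_true]
      set k := (KK G L i).card
      set d := (DD G L i).card
      have q1 := (rho_tendsto k).comp t8
      have q2 := (rho_tendsto k).comp t7
      have q3 := (rho_tendsto (k+d)).comp t7
      have q := q1.add (((q1.sub (q2.const_mul ((7/8:ℝ)^(k+1)))).add (q3.const_mul ((7/8:ℝ)^(k+1)))).const_mul (x-1))
      refine (q.congr' ?_).trans (le_of_eq ?_)
      · filter_upwards [eventually_gt_atTop 0] with m hm
        rw [E1_eq x k d m hm]; rfl
      · congr 1
        unfold e1
        rw [hx]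
        push_cast
        ring
    · simp only [B, hA, if_false]
      set k := (KK G L i).card
      set d := (DD G L i).card
      have q3 := ((rho_tendsto (k+d)).comp t7).const_mul ((7/8:ℝ)^(k+d+1))
      have q1 := (tinv.add ((tinv.const_sub 1).const_mul x)).pow (k+1)
      have tt := tinv.const_add (7/8:ℝ)
      have q2 := (tt.add ((tt.const_sub 1).const_mul x)).pow (k+1)
      have q := ((q1.sub q2).div_const ((x-1)*((k:ℝ)+1))).sub q3
      refine q.trans (le_of_eq ?_)
      congr 1
      unfold e2
      rw [hx]
      push_cast
      norm_num
      ring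
  have hlhs : Tendsto (fun m => ∏ i ∈ Finset.univ.filter (fun i => i ∉ L), max 0 (B m i)) atTop
      (𝓝 (∏ i ∈ Finset.univ.filter (fun i => i ∉ L), max 0 (if i ∈ A then e1 (KK G L i).card (DD G L i).card else e2 (KK G L i).card (DD G L i).card))) :=
    tendsto_finset_prod _ fun i _ => tendsto_const_nhds.max (hB i)
  set n := Fintype.card V with hn
  have hdes : Tendsto (fun N : ℕ => (N.descFactorial n : ℝ)/(N:ℝ)^n) atTop (𝓝 1) := by
    have h := isEquivalent_descFactorial n
    rw [Asymptotics.isEquivalent_iff_tendsto_one] at h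
    · exact h
    · filter_upwards [eventually_gt_atTop 0] with m hm
      positivity
  have hrhs : Tendsto (fun m : ℕ => permTutte G A x 0 + x^n * (1 - ((8*m).descFactorial n : ℝ)/((8*m:ℕ):ℝ)^n)) atTop
      (𝓝 (permTutte G A x 0)) := by
    have := (((hdes.comp t8).const_sub 1).const_mul (x^n)).const_add (permTutte G A x 0)
    simpa using this
  refine le_of_tendsto_of_tendsto hlhs hrhs ?_
  filter_upwards [eventually_gt_atTop 0] with m hm
  have h1 := disc_ge G A L c hbip hL x hx1.le (8*m) (7*m) (by omega) (by omega)
  have h2 := disc_le G A x hx1.le (8*m)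
  have h3 : ∏ i ∈ Finset.univ.filter (fun i => i ∉ L), max 0 (B m i) ≤ ∏ i ∈ Finset.univ.filter (fun i => i ∉ L), max 0 (if i ∈ A then E1 x (KK G L i).card (DD G L i).card (8*m) (7*m) else E2 x (KK G L i).card (DD G L i).card (8*m) (7*m)) := by
    apply Finset.prod_le_prod
    · intro i _; exact le_max_left _ _
    · intro i _
      apply max_le_max le_rfl
      by_cases hA : i ∈ A
      · simp only [B, hA, if_true]; exact le_rfl
      · simp only [B, hA, if_false]
        exact E2_ge x hx1 _ _ m hm
  refine h3.trans (h1.trans ?_)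
  have hN : (0:ℝ) < ((8*m:ℕ):ℝ) := by positivity
  refine (mul_le_mul_of_nonneg_left h2 (by positivity)).trans (le_of_eq ?_)
  rw [← hn, one_div, inv_pow]
  field_simp

theorem e1_pos (k d : ℕ) : 0 < e1 k d := by
  unfold e1
  have : (7/8:ℝ)^(k+1) ≤ 1 := pow_le_one₀ (by norm_num) (by norm_num)
  have h2 : 0 ≤ (1-(7/8:ℝ)^(k+1))/((k:ℝ)+1) := by apply div_nonneg; linarith; positivity
  positivity

theorem exists_leaves {V : Type*} [Fintype V] [DecidableEq V] (G : SimpleGraph V) [DecidableRel G.Adj]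
    (A : Set V) (hbip : IsBipartition G A) (hdeg : ∀ v : V, 1 ≤ G.degree v) :
    ∃ (L : Set V) (c : V → V), (∀ j ∈ L, c j ∉ L ∧ ∀ v, G.Adj j v ↔ v = c j) ∧
      ∀ i, i ∉ L → 1 ≤ (KK G L i).card ∨ 2 ≤ (DD G L i).card := by
  have h1 : ∀ v, ∃ w, G.Adj v w := by
    intro v
    exact (G.degree_pos_iff_exists_adj v).1 (hdeg v)
  choose c hc using h1
  let D1 : V → Prop := fun j => ∀ v, G.Adj j v ↔ v = c j
  refine ⟨{j | D1 j ∧ (j ∉ A ∨ ¬ D1 (c j))}, c, ?_, ?_⟩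
  · rintro j ⟨hj, hj2⟩
    refine ⟨?_, hj⟩
    rintro ⟨h3, h4⟩
    have hcc : c (c j) = j := ((h3 j).1 (hc j).symm).symm
    rw [hcc] at h4
    have hb := hbip j (c j) (hc j)
    rcases hj2 with h | h
    · rcases h4 with h4 | h4
      · exact h (hb.2 h4)
      · exact h4 hj
    · exact h h3
  · intro i hi
    by_cases hK : (KK G {j | D1 j ∧ (j ∉ A ∨ ¬ D1 (c j))} i).card = 0
    · right
      have hK' : ∀ v, G.Adj i v → ¬ (D1 v ∧ (v ∉ A ∨ ¬ D1 (c v))) := by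
        intro v hv hvL
        rw [Finset.card_eq_zero] at hK
        have : v ∈ KK G {j | D1 j ∧ (j ∉ A ∨ ¬ D1 (c j))} i := by
          simp only [KK, Finset.mem_filter, Finset.mem_univ, true_and]
          exact ⟨hv, hvL⟩
        rw [hK] at this
        simp at this
      have hnd : ¬ D1 i := by
        intro hd
        simp only [Set.mem_setOf_eq, not_and, not_or, not_not] at hi
        obtain ⟨hiA, hdc⟩ := hi hd
        exact hK' (c i) (hc i) ⟨hdc, Or.inl ((hbip i (c i) (hc i)).1 hiA)⟩
      have : ∃ w, G.Adj i w ∧ w ≠ c i := by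
        by_contra hcon
        push Not at hcon
        exact hnd fun v => ⟨hcon v, fun h => h ▸ hc i⟩
      obtain ⟨w, hw, hwc⟩ := this
      apply Nat.succ_le_of_lt
      rw [Finset.one_lt_card]
      refine ⟨w, ?_, c i, ?_, hwc⟩
      · simp only [DD, Finset.mem_filter, Finset.mem_univ, true_and]
        exact ⟨hw, hK' w hw⟩
      · simp only [DD, Finset.mem_filter, Finset.mem_univ, true_and]
        exact ⟨hc i, hK' _ (hc i)⟩
    · left; omega

theorem permTutte_ge_one_of_ge
    {V : Type*} [Fintype V] [DecidableEq V] (G : SimpleGraph V) [DecidableRel G.Adj]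
    (A : Set V) (hbip : IsBipartition G A)
    (hdeg : ∀ v : V, 1 ≤ G.degree v)
    (x : ℝ) (hx : 2.355 ≤ x) :
    permTutte G A x 0 * permTutte G A 0 x ≥ 1 := by
  have hx' : (471/200:ℝ) ≤ x := by norm_num at hx ⊢; exact hx
  obtain ⟨L, c, hL, hdeg2⟩ := exists_leaves G A hbip hdeg
  have hbip' : IsBipartition G Aᶜ := by
    intro u v huv
    have := hbip u v huv
    simp only [Set.mem_compl_iff]
    tauto
  have h1 := permTutte_ge G A L c hbip hL
  have h2 := permTutte_ge G Aᶜ L c hbip' hL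
  have m1 := permTutte_mono G A (471/200) x (by norm_num) hx'
  have m2 := permTutte_mono G Aᶜ (471/200) x (by norm_num) hx'
  rw [permTutte_swap, ge_iff_le]
  have p0 : ∀ q : V → ℝ, 0 ≤ ∏ i ∈ Finset.univ.filter (fun i => i ∉ L), max 0 (q i) := fun q =>
    Finset.prod_nonneg fun i _ => le_max_left _ _
  refine le_trans ?_ (mul_le_mul (h1.trans m1) (h2.trans m2) (p0 _) (permTutte_nonneg G A x (by linarith)))
  rw [← Finset.prod_mul_distrib]
  have hone : (1:ℝ) = ∏ i ∈ Finset.univ.filter (fun i => i ∉ L), (1:ℝ) := by simp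
  rw [hone]
  apply Finset.prod_le_prod (fun i _ => zero_le_one)
  intro i hi
  simp only [Finset.mem_filter, Finset.mem_univ, true_and] at hi
  have hm := num_main _ _ (hdeg2 i hi)
  have h1p := e1_pos (KK G L i).card (DD G L i).card
  have h2p : 0 ≤ e2 (KK G L i).card (DD G L i).card := by
    by_contra hc
    push Not at hc
    nlinarith
  by_cases hA : i ∈ A
  · simp only [hA, Set.mem_compl_iff, not_true, if_true, if_false]
    rw [max_eq_right h1p.le, max_eq_right h2p]; exact hm
  · simp only [hA, Set.mem_compl_iff, not_false_iff, if_true, if_false]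
    rw [max_eq_right h1p.le, max_eq_right h2p, mul_comm]; exact hm
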